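/- Let J be a finite-dimensional Jordan algebra over a field F of characteristic not equal to 2 such that every F-linear endomorphism of J is a quasiderivation. If there exists x ∈ J with x ≠ 0 and x*x = 0, then J has zero multiplication: a*b = 0 for all a, b ∈ J. -/

import Mathlib

/-!
In a vector space a nonzero vector `x` can be sent to any vector `a` by an endomorphism `f`.
If `Q` witnesses that `f` is a quasiderivation, evaluating at `(x, x)` gives `0 = a * x + x * a`,
so in characteristic `≠ 2` the element `x` annihilates the algebra; evaluating at `(x, b)` then
gives `0 = a * b`.
-/

section Quasiderivation

variable {R A : Type*} [Semiring R] [NonUnitalNonAssocSemiring A] [Module R A]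

/-- Quasiderivations of a nonassociative algebra `A`: the Leibniz rule is weakened by letting a
second linear map `Q`, not recorded as data, replace `f` on products. -/
def IsQuasiderivation (f : A →ₗ[R] A) : Prop :=
  ∃ Q : A →ₗ[R] A, ∀ x y : A, Q (x * y) = f x * y + x * f y

namespace IsQuasiderivation

variable {f : A →ₗ[R] A} {x y : A}

theorem apply_mul_add_mul_apply_eq_zero (hf : IsQuasiderivation f) (hxy : x * y = 0) :
    f x * y + x * f y = 0 := by
  obtain ⟨Q, hQ⟩ := hf
  rw [← hQ, hxy, map_zero]

theorem two_nsmul_mul_apply_eq_zero (hf : IsQuasiderivation f) (hcomm : Commute x (f x))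
    (hxx : x * x = 0) : 2 • (x * f x) = 0 := by
  simpa only [two_nsmul, hcomm.eq] using hf.apply_mul_add_mul_apply_eq_zero hxx

theorem apply_mul_eq_zero (hf : IsQuasiderivation f) (hx : ∀ a, x * a = 0) (b : A) :
    f x * b = 0 := by
  simpa only [hx, add_zero] using hf.apply_mul_add_mul_apply_eq_zero (hx b)

end IsQuasiderivation

end Quasiderivation

theorem exists_linearMap_apply_eq_of_ne_zero {K V W : Type*} [DivisionRing K] [AddCommGroup V]
    [Module K V] [AddCommGroup W] [Module K W] {v : V} (hv : v ≠ 0) (w : W) :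
    ∃ f : V →ₗ[K] W, f v = w :=
  have hv_notMem : v ∉ (⊥ : Submodule K V) := mt (Submodule.mem_bot K).mp hv
  (LinearMap.exists_extend_of_notMem 0 hv_notMem w).imp fun _ hf ↦ hf.2

theorem jordan_zero_mul_of_nilpotent_element_general
    {F J : Type*} [DivisionRing F] (hchar : ringChar F ≠ 2)
    [NonUnitalNonAssocRing J] [Module F J]
    (hq : ∀ f : J →ₗ[F] J, IsQuasiderivation f)
    {x : J} (hx : x ≠ 0) (hcomm : ∀ a : J, Commute x a) (hxx : x * x = 0) :
    ∀ a b : J, a * b = 0 := by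
  have x_mul_eq_zero (a : J) : x * a = 0 := by
    obtain ⟨f, rfl⟩ := exists_linearMap_apply_eq_of_ne_zero (K := F) hx a
    have two_smul_eq_zero : (2 : F) • (x * f x) = 0 := by
      rw [ofNat_smul_eq_nsmul]
      exact (hq f).two_nsmul_mul_apply_eq_zero (hcomm (f x)) hxx
    exact (smul_eq_zero.mp two_smul_eq_zero).resolve_left (Ring.two_ne_zero hchar)
  intro a b
  obtain ⟨f, rfl⟩ := exists_linearMap_apply_eq_of_ne_zero (K := F) hx a
  exact (hq f).apply_mul_eq_zero x_mul_eq_zero b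

/-- If `J` is a finite-dimensional Jordan algebra over a field of characteristic ≠ 2 in
which every linear endomorphism is a quasiderivation, and `J` contains a nonzero element
`x` with `x * x = 0`, then `J` has zero multiplication. -/
theorem jordan_zero_mul_of_nilpotent_element
    {F J : Type*} [Field F] (hchar : ringChar F ≠ 2)
    [NonUnitalNonAssocRing J] [Module F J] [SMulCommClass F J J] [IsScalarTower F J J]
    [FiniteDimensional F J]
    (comm : ∀ x y : J, x * y = y * x)
    (jordan : ∀ x y : J, ((x * x) * y) * x = (x * x) * (y * x))
    (hq : ∀ f : J →ₗ[F] J, ∃ Q : J →ₗ[F] J, ∀ x y : J, Q (x * y) = f x * y + x * f y)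
    (hx : ∃ x : J, x ≠ 0 ∧ x * x = 0) :
    ∀ a b : J, a * b = 0 := by
  obtain ⟨x, hx0, hxx⟩ := hx
  exact jordan_zero_mul_of_nilpotent_element_general hchar hq hx0 (comm x) hxx
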